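/- For every integer n ≥ 2, n²/M(n) ≤ 𝔑(n²), where M(n) is the number of distinct entries of the n × n multiplication table and 𝔑(x) = x^{(log 2 / log log x)(1 + 387/(200 log log x))}. -/

import Mathlib

/-- Multiplication table function M(n): number of distinct products ij with 1 ≤ i,j ≤ n. -/
def multTable (n : ℕ) : ℕ :=
  ((Finset.Icc 1 n ×ˢ Finset.Icc 1 n).image (fun p => p.1 * p.2)).card

/-- Nicolas's bound 𝔑(x) = x^{(log 2 / log log x)(1 + 387/(200 log log x))}. -/
noncomputable def nicolasBound (x : ℝ) : ℝ :=
  x ^ ((Real.log 2 / Real.log (Real.log x)) * (1 + 387 / (200 * Real.log (Real.log x))))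

/-!
An element `c` of the product set `A * B` has at most `d(c)` representations `c = ab`, and the
divisor counting function `d` is submultiplicative, so the multiplicative energy of `A` and `B` is
at most `(∑_{a ∈ A} d(a)) (∑_{b ∈ B} d(b))`. Cauchy–Schwarz turns this into a lower bound for
`|A * B|`; for `A = [1, m]` and `B = [1, n]`, where `∑_{a ≤ n} d(a) ≤ n (1 + log n)`, the average
multiplicity in the table is at most `(1 + log m) (1 + log n) ≤ (1 + log (mn) / 2)²`.

To compare this with `𝔑(x)` for `x = mn > e`, put `s = √(log x)`: one has
`(1 + s² / 2)² ≤ exp (4s / 3)`, and `log 𝔑(x) ≥ 4s / 3` becomes, in terms of `w = log s`, a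
polynomial inequality once `exp w` is replaced by its cubic Taylor polynomial.
-/

open Finset Real
open scoped Pointwise Combinatorics.Additive

lemma card_divisors_mul_le (a b : ℕ) :
    #(a * b).divisors ≤ #a.divisors * #b.divisors := by
  rw [Nat.divisors_mul]
  exact card_mul_le

lemma card_filter_mul_eq_le_card_divisors (s t : Finset ℕ) {a : ℕ} (ha : a ≠ 0) :
    #{p ∈ s ×ˢ t | p.1 * p.2 = a} ≤ #a.divisors := by
  have hsub : {p ∈ s ×ˢ t | p.1 * p.2 = a} ⊆ a.divisorsAntidiagonal := fun p hp ↦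
    Nat.mem_divisorsAntidiagonal.2 ⟨(mem_filter.1 hp).2, ha⟩
  calc #{p ∈ s ×ˢ t | p.1 * p.2 = a} ≤ #a.divisorsAntidiagonal := card_le_card hsub
    _ = #a.divisors := by rw [← Nat.map_div_right_divisors, card_map]

lemma mulEnergy_le_sum_card_divisors_mul {s t : Finset ℕ} (hs : 0 ∉ s) (ht : 0 ∉ t) :
    Eₘ[s, t] ≤ (∑ a ∈ s, #a.divisors) * ∑ b ∈ t, #b.divisors := by
  calc Eₘ[s, t]
      = ∑ p ∈ s ×ˢ t, #{q ∈ s ×ˢ t | q.1 * q.2 = p.1 * p.2} := by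
        simp only [mulEnergy_eq_card_filter, card_filter, sum_product, eq_comm]
    _ ≤ ∑ p ∈ s ×ˢ t, #p.1.divisors * #p.2.divisors := by
        refine sum_le_sum fun p hp ↦ ?_
        obtain ⟨hp₁, hp₂⟩ := mem_product.1 hp
        have hp₀ : p.1 * p.2 ≠ 0 :=
          mul_ne_zero (ne_of_mem_of_not_mem hp₁ hs) (ne_of_mem_of_not_mem hp₂ ht)
        exact (card_filter_mul_eq_le_card_divisors s t hp₀).trans (card_divisors_mul_le _ _)
    _ = (∑ a ∈ s, #a.divisors) * ∑ b ∈ t, #b.divisors := by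
        rw [sum_mul_sum, sum_product]

lemma sum_card_divisors_le_mul_one_add_log (n : ℕ) :
    ((∑ a ∈ Icc 1 n, #a.divisors : ℕ) : ℝ) ≤ n * (1 + log n) := by
  have hdiv : ∑ a ∈ Icc 1 n, #a.divisors = ∑ k ∈ Icc 1 n, n / k := by
    simpa only [ArithmeticFunction.sigma_zero_apply, ← Icc_add_one_left_eq_Ioc, zero_add]
      using ArithmeticFunction.sum_Ioc_sigma0_eq_sum_div n
  calc ((∑ a ∈ Icc 1 n, #a.divisors : ℕ) : ℝ)
      = ∑ k ∈ Icc 1 n, ((n / k : ℕ) : ℝ) := by rw [hdiv, Nat.cast_sum]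
    _ ≤ ∑ k ∈ Icc 1 n, (n : ℝ) / k := sum_le_sum fun _ _ ↦ Nat.cast_div_le
    _ = n * (harmonic n : ℝ) := by
        simp only [harmonic_eq_sum_Icc, Rat.cast_sum, Rat.cast_inv, Rat.cast_natCast, mul_sum,
          div_eq_mul_inv]
    _ ≤ n * (1 + log n) := by gcongr; exact harmonic_le_one_add_log n

lemma mul_le_card_Icc_mul_Icc_mul_log (m n : ℕ) :
    (m * n : ℝ) ≤ #(Icc 1 m * Icc 1 n) * ((1 + log m) * (1 + log n)) := by
  obtain rfl | hm := m.eq_zero_or_pos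
  · simp
  obtain rfl | hn := n.eq_zero_or_pos
  · simp
  have energy_le : (Eₘ[Icc 1 m, Icc 1 n] : ℝ) ≤ (m * (1 + log m)) * (n * (1 + log n)) := by
    calc (Eₘ[Icc 1 m, Icc 1 n] : ℝ)
        ≤ (∑ a ∈ Icc 1 m, #a.divisors : ℕ) * (∑ b ∈ Icc 1 n, #b.divisors : ℕ) := by
          exact_mod_cast mulEnergy_le_sum_card_divisors_mul (by simp) (by simp)
      _ ≤ _ := by
          gcongr <;> exact sum_card_divisors_le_mul_one_add_log _
  have cauchy_schwarz :
      (m : ℝ) ^ 2 * n ^ 2 ≤ #(Icc 1 m * Icc 1 n) * Eₘ[Icc 1 m, Icc 1 n] := by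
    have h := le_card_mul_mul_mulEnergy (Icc 1 m) (Icc 1 n)
    simp only [Nat.card_Icc, Nat.add_sub_cancel] at h
    exact_mod_cast h
  refine le_of_mul_le_mul_right ?_ (show (0 : ℝ) < m * n by positivity)
  calc (m * n : ℝ) * (m * n) = m ^ 2 * n ^ 2 := by ring
    _ ≤ #(Icc 1 m * Icc 1 n) * ((m * (1 + log m)) * (n * (1 + log n))) :=
        cauchy_schwarz.trans (by gcongr)
    _ = #(Icc 1 m * Icc 1 n) * ((1 + log m) * (1 + log n)) * (m * n) := by ring

lemma one_add_log_mul_one_add_log_le {x y : ℝ} (hx : x ≠ 0) (hy : y ≠ 0) :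
    (1 + log x) * (1 + log y) ≤ (1 + log (x * y) / 2) ^ 2 := by
  rw [log_mul hx hy]
  linarith [four_mul_le_sq_add (1 + log x) (1 + log y)]

lemma cubic_le_exp_of_nonneg {x : ℝ} (hx : 0 ≤ x) : 1 + x + x ^ 2 / 2 + x ^ 3 / 6 ≤ exp x := by
  simpa [sum_range_succ, Nat.factorial] using sum_le_exp_of_nonneg hx 4

lemma one_add_sq_div_two_le_exp {s : ℝ} (hs : 0 ≤ s) : 1 + s ^ 2 / 2 ≤ exp (2 * s / 3) := by
  refine le_trans ?_ (cubic_le_exp_of_nonneg (show 0 ≤ 2 * s / 3 by positivity))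
  nlinarith [mul_nonneg hs (sq_nonneg (s - 3))]

lemma mul_sq_le_log_two_mul_exp {w : ℝ} (hw : 0 ≤ w) :
    16 / 3 * w ^ 2 ≤ log 2 * (2 * w + 387 / 200) * exp w := by
  have polynomial_le :
      16 / 3 * w ^ 2 ≤ 0.69 * (2 * w + 387 / 200) * (1 + w + w ^ 2 / 2 + w ^ 3 / 6) := by
    nlinarith [mul_nonneg hw (sq_nonneg (w - 3 / 2)), sq_nonneg (w ^ 2 - 2), sq_nonneg (w - 3 / 2)]
  have log_two_ge : 0.69 ≤ log 2 := by linarith [log_two_gt_d9]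
  refine polynomial_le.trans ?_
  gcongr
  exact cubic_le_exp_of_nonneg hw

lemma one_add_log_div_two_sq_le_nicolasBound {x : ℝ} (hx : exp 1 < x) :
    (1 + log x / 2) ^ 2 ≤ nicolasBound x := by
  have hx₀ : 0 < x := (exp_pos 1).trans hx
  have hlog : 1 < log x := (lt_log_iff_exp_lt hx₀).2 hx
  obtain ⟨w, hw⟩ : ∃ w, 2 * w = log (log x) := ⟨log (log x) / 2, by ring⟩
  have hw₀ : 0 < w := by linarith [log_pos hlog]
  have hsq : log x = exp w ^ 2 := by
    rw [← exp_nat_mul, Nat.cast_ofNat, hw, exp_log (by linarith)]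
  have exponent_le :
      4 / 3 * exp w ≤ exp w ^ 2 * (log 2 / (2 * w) * (1 + 387 / (200 * (2 * w)))) := by
    calc 4 / 3 * exp w = 16 / 3 * w ^ 2 * (exp w / (4 * w ^ 2)) := by field_simp; ring
      _ ≤ log 2 * (2 * w + 387 / 200) * exp w * (exp w / (4 * w ^ 2)) :=
          mul_le_mul_of_nonneg_right (mul_sq_le_log_two_mul_exp hw₀.le) (by positivity)
      _ = exp w ^ 2 * (log 2 / (2 * w) * (1 + 387 / (200 * (2 * w)))) := by field_simp; ring
  calc (1 + log x / 2) ^ 2 ≤ exp (2 * exp w / 3) ^ 2 := by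
        rw [hsq]
        gcongr
        exact one_add_sq_div_two_le_exp (exp_pos w).le
    _ = exp (4 / 3 * exp w) := by rw [← exp_nat_mul]; congr 1; push_cast; ring
    _ ≤ nicolasBound x := by
        rw [nicolasBound, rpow_def_of_pos hx₀, ← hw, hsq]
        exact exp_le_exp.2 exponent_le

theorem avg_multiplicity_le_nicolasBound_general {m n : ℕ} (hmn : 3 ≤ m * n) :
    (m * n : ℝ) / #(Icc 1 m * Icc 1 n) ≤ nicolasBound (m * n) := by
  have hm : (m : ℝ) ≠ 0 := Nat.cast_ne_zero.2 (by rintro rfl; simp at hmn)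
  have hn : (n : ℝ) ≠ 0 := Nat.cast_ne_zero.2 (by rintro rfl; simp at hmn)
  have hexp : exp 1 < m * n := exp_one_lt_three.trans_le (mod_cast hmn)
  have hlog : (1 + log m) * (1 + log n) ≤ nicolasBound (m * n) :=
    (one_add_log_mul_one_add_log_le hm hn).trans (one_add_log_div_two_sq_le_nicolasBound hexp)
  have hbound : 0 ≤ nicolasBound (m * n) := rpow_nonneg (by positivity) _
  refine div_le_of_le_mul₀ (by positivity) hbound ?_
  calc (m * n : ℝ) ≤ #(Icc 1 m * Icc 1 n) * ((1 + log m) * (1 + log n)) :=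
        mul_le_card_Icc_mul_Icc_mul_log m n
    _ ≤ nicolasBound (m * n) * #(Icc 1 m * Icc 1 n) := by rw [mul_comm]; gcongr

theorem avg_multiplicity_le_nicolasBound (n : ℕ) (hn : 2 ≤ n) :
    (n : ℝ) ^ 2 / (multTable n : ℝ) ≤ nicolasBound ((n : ℝ) ^ 2) := by
  rw [sq]
  exact avg_multiplicity_le_nicolasBound_general (by nlinarith)
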